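/- arXiv:0806.1214 — 3 statements merged into one kernel-verified Lean document; each statement's English description precedes it below -/
import Mathlib

section
/- Let X and Y be finite sets with |X| = m and |Y| = n, both at least 1. The number of spanning trees of the complete bipartite graph K_{m,n} is m^(n-1) * n^(m-1). -/
open Finset

/-- `p` is a parent function for a tree rooted at `r`, along edges of `G`. -/
def IsParent {V : Type*} (G : SimpleGraph V) (r : V) (p : V → V) : Prop :=
  p r = r ∧ (∀ v, v ≠ r → G.Adj v (p v)) ∧ ∀ v, ∃ k, p^[k] v = r

/-- The graph of a parent function. -/
def parGraph {V : Type*} (p : V → V) : SimpleGraph V := SimpleGraph.fromRel (fun u v => p u = v)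

lemma parGraph_adj {V : Type*} (p : V → V) (u v : V) :
    (parGraph p).Adj u v ↔ u ≠ v ∧ (p u = v ∨ p v = u) := by
  simp [parGraph, SimpleGraph.fromRel_adj]

lemma parGraph_reach {V : Type*} (p : V → V) (v : V) (k : ℕ) :
    (parGraph p).Reachable v (p^[k] v) := by
  induction k with
  | zero => exact SimpleGraph.Reachable.refl _
  | succ k ih =>
    refine ih.trans ?_
    rw [Function.iterate_succ_apply']
    by_cases h : p^[k] v = p (p^[k] v)
    · rw [← h]
    · exact SimpleGraph.Adj.reachable ((parGraph_adj _ _ _).2 ⟨h, Or.inl rfl⟩)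

lemma parGraph_connected {V : Type*} {r : V} {p : V → V} (h : ∀ v, ∃ k, p^[k] v = r) :
    (parGraph p).Connected := by
  have hr : ∀ v, (parGraph p).Reachable v r := by
    intro v
    obtain ⟨k, hk⟩ := h v
    have := parGraph_reach p v k
    rwa [hk] at this
  exact { preconnected := fun u v => (hr u).trans (hr v).symm, nonempty := ⟨r⟩ }

lemma parGraph_isTree {V : Type*} [Fintype V] {r : V} {p : V → V} (h0 : p r = r)
    (h : ∀ v, ∃ k, p^[k] v = r) : (parGraph p).IsTree := by
  classical
  have hc := parGraph_connected h
  rw [SimpleGraph.isTree_iff_connected_and_card]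
  refine ⟨hc, le_antisymm ?_ hc.card_vert_le_card_edgeSet_add_one⟩
  have hsub : (parGraph p).edgeSet ⊆
      (((univ.erase r).image (fun v => s(v, p v)) : Finset (Sym2 V)) : Set (Sym2 V)) := by
    intro e
    induction e using Sym2.ind with
    | _ u v =>
      intro he
      rw [SimpleGraph.mem_edgeSet, parGraph_adj] at he
      obtain ⟨hne, he | he⟩ := he
      · simp only [coe_image, Set.mem_image]
        refine ⟨u, ?_, by rw [he]⟩
        have : u ≠ r := by rintro rfl; exact hne (h0.symm.trans he)
        simpa using this
      · simp only [coe_image, Set.mem_image]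
        refine ⟨v, ?_, by rw [he, Sym2.eq_swap]⟩
        have : v ≠ r := by rintro rfl; exact hne (he.symm.trans h0)
        simpa using this
  have h1 := Set.ncard_le_ncard hsub (Finset.finite_toSet _)
  rw [Set.ncard_coe_finset] at h1
  have h2 := h1.trans Finset.card_image_le
  rw [Finset.card_erase_of_mem (mem_univ r), card_univ] at h2
  have : 0 < Fintype.card V := Fintype.card_pos_iff.2 ⟨r⟩
  rw [Nat.card_eq_fintype_card (α := V)]
  change (parGraph p).edgeSet.ncard + 1 ≤ _
  omega

lemma parGraph_le {V : Type*} {G : SimpleGraph V} {r : V} {p : V → V} (h : IsParent G r p) :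
    parGraph p ≤ G := by
  intro u v huv
  rw [parGraph_adj] at huv
  obtain ⟨hne, he | he⟩ := huv
  · have : u ≠ r := by rintro rfl; exact hne (h.1.symm.trans he)
    exact he ▸ h.2.1 u this
  · have : v ≠ r := by rintro rfl; exact hne (he.symm.trans h.1)
    exact he ▸ (h.2.1 v this).symm

lemma iter_two {V : Type*} {p : V → V} {v : V} (h : p (p v) = v) (j : ℕ) :
    p^[j] v = v ∨ p^[j] v = p v := by
  induction j with
  | zero => left; rfl
  | succ j ih =>
    rw [Function.iterate_succ_apply']
    rcases ih with ih | ih <;> rw [ih]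
    · right; rfl
    · left; exact h

lemma parGraph_inj {V : Type*} {G : SimpleGraph V} {r : V} {p q : V → V} (hp : IsParent G r p)
    (hq : IsParent G r q) (heq : parGraph p = parGraph q) : p = q := by
  have key : ∀ k v, p^[k] v = r → p v = q v := by
    intro k
    induction k with
    | zero => intro v hv; change v = r at hv; rw [hv, hp.1, hq.1]
    | succ k ih =>
      intro v hv
      by_cases hvr : v = r
      · rw [hvr, hp.1, hq.1]
      have h1 := ih (p v) hv
      have hadj : (parGraph p).Adj v (p v) :=
        (parGraph_adj _ _ _).2 ⟨(hp.2.1 v hvr).ne, Or.inl rfl⟩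
      rw [heq, parGraph_adj] at hadj
      rcases hadj.2 with h | h
      · exact h.symm
      · exfalso
        have h2 : p (p v) = v := h1.trans h
        obtain ⟨j, hj⟩ := hp.2.2 v
        rcases iter_two h2 j with h3 | h3
        · exact hvr (h3.symm.trans hj)
        · have : p v = r := h3.symm.trans hj
          rw [this, hp.1] at h2
          exact hvr h2.symm
  funext v
  obtain ⟨k, hk⟩ := hp.2.2 v
  exact key k v hk

lemma exists_parent {V : Type*} [Fintype V] {G H : SimpleGraph V} (r : V) (hle : H ≤ G)
    (hT : H.IsTree) : ∃ p, IsParent G r p ∧ parGraph p = H := by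
  classical
  have hc := hT.connected
  have hstep : ∀ v, v ≠ r → ∃ w, H.Adj v w ∧ H.dist w r < H.dist v r := by
    intro v hv
    obtain ⟨W, hW⟩ := hc.exists_walk_length_eq_dist v r
    cases W with
    | nil => exact absurd rfl hv
    | cons hadj W' =>
      refine ⟨_, hadj, ?_⟩
      rw [← hW, SimpleGraph.Walk.length_cons]
      exact Nat.lt_succ_of_le (SimpleGraph.dist_le W')
  choose! f hf using hstep
  let p : V → V := fun v => if v = r then r else f v
  have hpr : p r = r := by simp [p]
  have hpv : ∀ v, v ≠ r → p v = f v := fun v hv => by simp [p, hv]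
  have hreach : ∀ d v, H.dist v r ≤ d → ∃ k, p^[k] v = r := by
    intro d
    induction d with
    | zero =>
      intro v hv
      refine ⟨0, ?_⟩
      by_contra hne
      have := (hf v hne).2
      omega
    | succ d ih =>
      intro v hv
      by_cases hne : v = r
      · exact ⟨0, hne⟩
      · obtain ⟨k, hk⟩ := ih (p v) (by rw [hpv v hne]; have := (hf v hne).2; omega)
        exact ⟨k + 1, hk⟩
  have hH : IsParent H r p :=
    ⟨hpr, fun v hv => by rw [hpv v hv]; exact (hf v hv).1, fun v => hreach _ v le_rfl⟩
  refine ⟨p, ⟨hpr, fun v hv => hle (hH.2.1 v hv), hH.2.2⟩, ?_⟩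
  have hmin := (SimpleGraph.isTree_iff_minimal_connected).1 hT
  exact le_antisymm (parGraph_le hH) (hmin.2 (parGraph_connected hH.2.2) (parGraph_le hH))

lemma ncard_trees_eq {V : Type*} [Fintype V] (G : SimpleGraph V) (r : V) :
    {H : SimpleGraph V | H ≤ G ∧ H.IsTree}.ncard = {p | IsParent G r p}.ncard := by
  have : {H : SimpleGraph V | H ≤ G ∧ H.IsTree} = parGraph '' {p | IsParent G r p} := by
    ext H
    constructor
    · rintro ⟨h1, h2⟩
      exact exists_parent r h1 h2
    · rintro ⟨p, hp, rfl⟩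
      exact ⟨parGraph_le hp, parGraph_isTree hp.1 hp.2.2⟩
  rw [this]
  exact Set.InjOn.ncard_image (fun p hp q hq h => parGraph_inj hp hq h)

/-- Row `v` of the matrix attached to the choice `w` of the parent of `v`. -/
def rowOf {V : Type*} [DecidableEq V] (r v w : V) : V → ℚ :=
  fun u => (if v = u then 1 else 0) - (if v = r then 0 else if w = u then 1 else 0)

lemma det_one_sub_nilp {V : Type*} [Fintype V] [DecidableEq V] (M : Matrix V V ℚ)
    (h : IsNilpotent M) : (1 - M).det = 1 := by
  have h1 := (Matrix.isNilpotent_charpoly_sub_pow_of_isNilpotent h).eq_zero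
  have h2 := Matrix.eval_charpoly M 1
  rw [sub_eq_zero.1 h1] at h2
  simpa using h2.symm

lemma det_parent {V : Type*} [Fintype V] [DecidableEq V] (r : V) (p : V → V) (h0 : p r = r)
    (h : ∀ v, ∃ k, p^[k] v = r) : Matrix.det (Matrix.of fun v => rowOf r v (p v)) = 1 := by
  let M : Matrix V V ℚ := Matrix.of fun v u => if v = r then 0 else if p v = u then 1 else 0
  have hM : (Matrix.of fun v => rowOf r v (p v)) = 1 - M := by
    ext v u
    simp [rowOf, M, Matrix.one_apply]
  rw [hM]
  apply det_one_sub_nilp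
  have hmv : ∀ x v, M.mulVec x v = if v = r then 0 else x (p v) := by
    intro x v
    by_cases hv : v = r <;> simp [M, Matrix.mulVec, dotProduct, hv]
  have key : ∀ k v x, p^[k] v = r → (M ^ (k + 1)).mulVec x v = 0 := by
    intro k
    induction k with
    | zero => intro v x hv; change v = r at hv; simp [hmv, hv]
    | succ k ih =>
      intro v x hv
      rw [pow_succ', ← Matrix.mulVec_mulVec, hmv]
      split_ifs
      · rfl
      · exact ih _ _ hv
  choose k hk using h
  let K := ∑ v, k v
  have hfix : ∀ j, p^[j] r = r := fun j => Function.iterate_fixed h0 j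
  refine ⟨K + 1, ?_⟩
  apply Matrix.ext_of_mulVec_single
  intro i
  ext v
  rw [Matrix.zero_mulVec, key K v _ ?_]; · rfl
  have hle : k v ≤ K := Finset.single_le_sum (f := k) (fun _ _ => Nat.zero_le _) (mem_univ v)
  obtain ⟨j, hj⟩ := Nat.exists_eq_add_of_le hle
  rw [hj, add_comm, Function.iterate_add_apply, hk, hfix]

lemma det_nonparent {V : Type*} [Fintype V] [DecidableEq V] (r : V) (p : V → V)
    (h : ¬ ∀ v, ∃ k, p^[k] v = r) : Matrix.det (Matrix.of fun v => rowOf r v (p v)) = 0 := by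
  classical
  rw [← Matrix.exists_mulVec_eq_zero_iff]
  refine ⟨fun v => if ∃ k, p^[k] v = r then 0 else 1, ?_, ?_⟩
  · push Not at h
    obtain ⟨v, hv⟩ := h
    intro h0
    have := congrFun h0 v
    simp [hv] at this
  · ext v
    have hpv : v ≠ r → ((∃ k, p^[k] (p v) = r) ↔ ∃ k, p^[k] v = r) := by
      intro hv
      constructor
      · rintro ⟨k, hk⟩; exact ⟨k + 1, hk⟩
      · rintro ⟨k, hk⟩
        cases k with
        | zero => exact absurd hk hv
        | succ k => exact ⟨k, hk⟩
    generalize hx : (fun v => if ∃ k, p^[k] v = r then (0 : ℚ) else 1) = x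
    have hmv : ((Matrix.of fun v => rowOf r v (p v)).mulVec x) v =
        x v - if v = r then 0 else x (p v) := by
      simp only [Matrix.mulVec, dotProduct, Matrix.of_apply, rowOf, sub_mul, sum_sub_distrib]
      by_cases hv : v = r <;> simp [hv]
    rw [hmv, ← hx]
    by_cases hv : v = r
    · have : ∃ k, p^[k] v = r := ⟨0, hv⟩
      simp only [if_pos this, if_pos hv, sub_zero, Pi.zero_apply]
    · simp only [if_neg hv, hpv hv, sub_self, Pi.zero_apply]

lemma matrix_tree {V : Type*} [Fintype V] [DecidableEq V] (G : SimpleGraph V)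
    [DecidableRel G.Adj] (r : V) :
    ({H : SimpleGraph V | H ≤ G ∧ H.IsTree}.ncard : ℚ) =
      Matrix.det (Matrix.of fun v => ∑ w ∈ (if v = r then {r} else G.neighborFinset v),
        rowOf r v w) := by
  classical
  rw [ncard_trees_eq G r]
  have h := (Matrix.detRowAlternating (n := V) (R := ℚ)).toMultilinearMap.map_sum_finset
    (fun v w => rowOf r v w) (fun v => if v = r then {r} else G.neighborFinset v)
  refine Eq.trans ?_ h.symm
  have hval : ∀ p ∈ Fintype.piFinset (fun v => if v = r then {r} else G.neighborFinset v),
      (Matrix.detRowAlternating (n := V) (R := ℚ)).toMultilinearMap (fun v => rowOf r v (p v))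
        = if IsParent G r p then 1 else 0 := by
    intro p hp
    rw [Fintype.mem_piFinset] at hp
    have h0 : p r = r := by simpa using hp r
    have h1 : ∀ v, v ≠ r → G.Adj v (p v) := fun v hv => by simpa [hv] using hp v
    change Matrix.det (Matrix.of fun v => rowOf r v (p v)) = _
    by_cases h2 : ∀ v, ∃ k, p^[k] v = r
    · rw [det_parent r p h0 h2, if_pos ⟨h0, h1, h2⟩]
    · rw [det_nonparent r p h2, if_neg (fun h => h2 h.2.2)]
  rw [Finset.sum_congr rfl hval, Finset.sum_boole, ← Set.ncard_coe_finset]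
  congr 2
  ext p
  simp only [Set.mem_ofPred_eq, coe_filter, Fintype.mem_piFinset]
  refine ⟨fun h => ⟨fun v => ?_, h⟩, fun h => h.2⟩
  by_cases hv : v = r
  · simp [hv, h.1]
  · simpa [hv] using h.2.1 v hv

lemma det_bip (m n : ℕ) (hn : 1 ≤ n)
    [DecidableRel (completeBipartiteGraph (Fin (m + 1)) (Fin n)).Adj] :
    Matrix.det (Matrix.of fun v : Fin (m + 1) ⊕ Fin n =>
      ∑ w ∈ (if v = Sum.inl 0 then {Sum.inl 0} else
        (completeBipartiteGraph (Fin (m + 1)) (Fin n)).neighborFinset v),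
        rowOf (Sum.inl 0) v w) = ((m + 1 : ℕ) : ℚ) ^ (n - 1) * (n : ℚ) ^ m := by
  have hn0 : (n : ℚ) ≠ 0 := by positivity
  have hm0 : ((m : ℚ) + 1) ≠ 0 := by positivity
  let d : Fin (m + 1) → ℚ := fun i => if i = 0 then 1 else n
  let e : Fin (m + 1) → ℚ := fun i => if i = 0 then 1 else (n : ℚ)⁻¹
  have hL : (Matrix.of fun v : Fin (m + 1) ⊕ Fin n =>
      ∑ w ∈ (if v = Sum.inl 0 then {Sum.inl 0} else
        (completeBipartiteGraph (Fin (m + 1)) (Fin n)).neighborFinset v),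
        rowOf (Sum.inl 0) v w) =
      Matrix.fromBlocks (Matrix.diagonal d)
        (Matrix.of fun i _ => if i = 0 then 0 else -1)
        (Matrix.of fun _ _ => -1)
        (((m : ℚ) + 1) • (1 : Matrix (Fin n) (Fin n) ℚ)) := by
    have hl : ∀ i, (completeBipartiteGraph (Fin (m + 1)) (Fin n)).neighborFinset (Sum.inl i)
        = univ.map ⟨Sum.inr, Sum.inr_injective⟩ := by
      intro i; ext w; cases w <;> simp
    have hr : ∀ i, (completeBipartiteGraph (Fin (m + 1)) (Fin n)).neighborFinset (Sum.inr i)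
        = univ.map ⟨Sum.inl, Sum.inl_injective⟩ := by
      intro i; ext w; cases w <;> simp
    ext v u
    rcases v with i | i <;> rcases u with j | j
    · by_cases hi : i = 0
      · simp [hi, rowOf, d, Matrix.diagonal_apply]
      · simp [hi, hl, rowOf, d, Matrix.diagonal_apply]
    · by_cases hi : i = 0
      · simp [hi, rowOf]
      · simp [hi, hl, rowOf]
    · simp [hr, rowOf]
    · simp [hr, rowOf, Matrix.one_apply]
  rw [hL]
  have hde : ∀ i, d i * e i = 1 := by
    intro i; by_cases hi : i = 0 <;> simp [d, e, hi, hn0]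
  let _ : Invertible (Matrix.diagonal d) := ⟨Matrix.diagonal e, by
    rw [Matrix.diagonal_mul_diagonal, ← Matrix.diagonal_one]; congr 1; ext i; rw [mul_comm, hde], by
    rw [Matrix.diagonal_mul_diagonal, ← Matrix.diagonal_one]; congr 1; ext i; rw [hde]⟩
  rw [Matrix.det_fromBlocks₁₁]
  have hinv : ⅟(Matrix.diagonal d) = Matrix.diagonal e := rfl
  rw [hinv]
  have hS : ((m : ℚ) + 1) • (1 : Matrix (Fin n) (Fin n) ℚ) -
      (Matrix.of fun _ _ => -1 : Matrix (Fin n) (Fin (m + 1)) ℚ) * Matrix.diagonal e *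
      (Matrix.of fun i _ => if i = 0 then 0 else -1 : Matrix (Fin (m + 1)) (Fin n) ℚ) =
      ((m : ℚ) + 1) • (1 - (Matrix.of fun _ _ => (m : ℚ) / (n * (m + 1)) :
        Matrix (Fin n) Unit ℚ) * (Matrix.of fun _ _ => 1 : Matrix Unit (Fin n) ℚ)) := by
    ext i j
    simp [Matrix.mul_apply, Matrix.diagonal_apply, e, Fin.sum_univ_succ, Matrix.one_apply]
    field_simp
    split_ifs <;> ring
  rw [hS, Matrix.det_smul, Matrix.det_one_sub_mul_comm, Matrix.det_diagonal]
  simp [d, Fin.prod_univ_succ, Matrix.mul_apply]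
  obtain ⟨k, rfl⟩ : ∃ k, n = k + 1 := ⟨n - 1, by omega⟩
  simp only [Nat.add_sub_cancel, pow_succ]
  push_cast at *
  field_simp
  ring

theorem stmt_0 (m n : ℕ) (hm : 1 ≤ m) (hn : 1 ≤ n) :
    {H : SimpleGraph (Fin m ⊕ Fin n) |
        H ≤ completeBipartiteGraph (Fin m) (Fin n) ∧ H.IsTree}.ncard
      = m ^ (n - 1) * n ^ (m - 1) := by
  classical
  obtain ⟨k, rfl⟩ : ∃ k, m = k + 1 := ⟨m - 1, by omega⟩
  have h := (matrix_tree (completeBipartiteGraph (Fin (k + 1)) (Fin n)) (Sum.inl 0)).trans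
    (det_bip k n hn)
  rw [Nat.add_sub_cancel]
  exact_mod_cast h
end

section
/- The ratio m^(n-1) * n^(m-1) / C(mn, m+n-1) tends to 0 as m and n both tend to infinity. -/
theorem fact_le_aux (k : ℕ) : (k.factorial : ℝ) ≤ ((k : ℝ) + 1) ^ (k + 1) * Real.exp (-(k : ℝ)) := by
  induction k with
  | zero => simp
  | succ k ih =>
    rw [Nat.factorial_succ]
    push_cast
    have hk : (0 : ℝ) ≤ k := Nat.cast_nonneg k
    have h1 : (k : ℝ) + 1 ≤ ((k : ℝ) + 1 + 1) * Real.exp (-(1 / ((k : ℝ) + 2))) := by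
      have h := Real.add_one_le_exp (-(1 / ((k : ℝ) + 2)))
      calc (k : ℝ) + 1 = ((k : ℝ) + 1 + 1) * (-(1 / ((k : ℝ) + 2)) + 1) := by field_simp; ring
        _ ≤ _ := by gcongr
    have h2 : ((k : ℝ) + 1) ^ (k + 2) ≤ ((k : ℝ) + 1 + 1) ^ (k + 2) * Real.exp (-1) := by
      calc ((k : ℝ) + 1) ^ (k + 2)
          ≤ (((k : ℝ) + 1 + 1) * Real.exp (-(1 / ((k : ℝ) + 2)))) ^ (k + 2) := by gcongr
        _ = _ := by
          rw [mul_pow, ← Real.exp_nat_mul]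
          congr 2
          push_cast
          field_simp
    calc ((k : ℝ) + 1) * (k.factorial : ℝ)
        ≤ ((k : ℝ) + 1) * (((k : ℝ) + 1) ^ (k + 1) * Real.exp (-(k : ℝ))) := by gcongr
      _ = ((k : ℝ) + 1) ^ (k + 2) * Real.exp (-(k : ℝ)) := by ring
      _ ≤ (((k : ℝ) + 1 + 1) ^ (k + 2) * Real.exp (-1)) * Real.exp (-(k : ℝ)) := by gcongr
      _ = ((k : ℝ) + 1 + 1) ^ (k + 1 + 1) * Real.exp (-((k : ℝ) + 1)) := by
        rw [mul_assoc, ← Real.exp_add]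
        congr 2
        ring

theorem pow_le_aux (x y t : ℝ) (k : ℕ) (hx : 0 ≤ x) (h : x ≤ y * Real.exp t) :
    x ^ k ≤ y ^ k * Real.exp (k * t) := by
  rw [Real.exp_nat_mul, ← mul_pow]
  gcongr

theorem lin_le_aux (x : ℝ) (hx : 1 ≤ x) : 1 + x ≤ Real.exp (7 / 10 * x) := by
  have h2 : (2 : ℝ) ≤ Real.exp (7 / 10) := by
    rw [← Real.log_le_iff_le_exp (by norm_num)]
    linarith [Real.log_two_lt_d9]
  have h3 := Real.add_one_le_exp (7 / 10 * (x - 1))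
  have : Real.exp (7 / 10 * x) = Real.exp (7 / 10) * Real.exp (7 / 10 * (x - 1)) := by
    rw [← Real.exp_add]; congr 1; ring
  rw [this]
  nlinarith

theorem succ_le_aux (a : ℝ) (ha : 0 < a) : a + 1 ≤ a * Real.exp (1 / a) := by
  have h := Real.add_one_le_exp (1 / a)
  calc a + 1 = a * (1 / a + 1) := by field_simp; ring
    _ ≤ _ := by gcongr

theorem key_aux (a b : ℕ) (ha : 40 ≤ a) (hab : a ≤ b) :
    (((a + 1) ^ b * (b + 1) ^ a : ℕ) : ℝ) ≤
      Real.exp (1 - ((b + 1 : ℕ) : ℝ) / 5) * (((a + 1) * (b + 1)).choose (a + b + 1) : ℝ) := by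
  have hC : ((a * b : ℕ) : ℝ) ^ (a + b + 1) ≤
      ((a + b + 1).factorial : ℝ) * (((a + 1) * (b + 1)).choose (a + b + 1) : ℝ) := by
    have h1 := Nat.pow_sub_le_descFactorial ((a + 1) * (b + 1)) (a + b + 1)
    rw [Nat.descFactorial_eq_factorial_mul_choose] at h1
    have h2 : a * b ≤ (a + 1) * (b + 1) + 1 - (a + b + 1) := by
      have : (a + 1) * (b + 1) = a * b + a + b + 1 := by ring
      omega
    exact_mod_cast (Nat.pow_le_pow_left h2 _).trans h1
  have hF := fact_le_aux (a + b + 1)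
  have hA : (40 : ℝ) ≤ a := by exact_mod_cast ha
  have hAB : (a : ℝ) ≤ b := by exact_mod_cast hab
  have hfpos : (0 : ℝ) < ((a + b + 1).factorial : ℝ) := by exact_mod_cast Nat.factorial_pos _
  push_cast at *
  set A : ℝ := (a : ℝ) with hAdef
  set B : ℝ := (b : ℝ) with hBdef
  set F : ℝ := ((a + b + 1).factorial : ℝ) with hFdef
  set C : ℝ := (((a + 1) * (b + 1)).choose (a + b + 1) : ℝ) with hCdef
  have hA0 : 0 < A := by linarith
  have hB0 : 0 < B := by linarith
  have e1 := pow_le_aux (A + 1) A (1 / A) (a + b + 1) (by positivity) (succ_le_aux A hA0)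
  have e2 := pow_le_aux (B + 1) B (1 / B) (a + b + 1) (by positivity) (succ_le_aux B hB0)
  have e3 := pow_le_aux (A + B + 1 + 1) (A + 1) (7 / 10 * ((B + 1) / (A + 1))) (a + 1)
    (by positivity) (by
      have := lin_le_aux ((B + 1) / (A + 1)) (by rw [le_div_iff₀ (by positivity)]; linarith)
      calc A + B + 1 + 1 = (A + 1) * (1 + (B + 1) / (A + 1)) := by field_simp; ring
        _ ≤ _ := by gcongr)
  have e4 := pow_le_aux (A + B + 1 + 1) (B + 1) ((A + 1) / (B + 1)) (b + 1)
    (by positivity) (by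
      have := Real.add_one_le_exp ((A + 1) / (B + 1))
      calc A + B + 1 + 1 = (B + 1) * ((A + 1) / (B + 1) + 1) := by field_simp; ring
        _ ≤ _ := by gcongr)
  push_cast at e1 e2 e3 e4
  rw [← hAdef, ← hBdef] at e1 e2
  rw [← hAdef] at e3
  rw [← hBdef] at e4
  have t3 : (A + 1) * (7 / 10 * ((B + 1) / (A + 1))) = 7 / 10 * (B + 1) := by field_simp
  have t4 : (B + 1) * ((A + 1) / (B + 1)) = A + 1 := by field_simp
  rw [t3] at e3
  rw [t4] at e4
  have t1 : (A + B + 1) * (1 / A) ≤ (B + 1) / 20 := by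
    rw [mul_one_div, div_le_iff₀ hA0]; nlinarith
  have t2 : (A + B + 1) * (1 / B) ≤ (B + 1) / 20 := by
    rw [mul_one_div, div_le_iff₀ hB0]; nlinarith
  have hP : 0 < (A + 1) ^ (a + 1) * (B + 1) ^ (b + 1) := by positivity
  have main : ((A + 1) ^ b * (B + 1) ^ a * F) * ((A + 1) ^ (a + 1) * (B + 1) ^ (b + 1)) ≤
      (Real.exp (1 - (B + 1) / 5) * (A * B) ^ (a + b + 1)) *
        ((A + 1) ^ (a + 1) * (B + 1) ^ (b + 1)) := by
    calc ((A + 1) ^ b * (B + 1) ^ a * F) * ((A + 1) ^ (a + 1) * (B + 1) ^ (b + 1))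
        = (A + 1) ^ (a + b + 1) * (B + 1) ^ (a + b + 1) * F := by ring
      _ ≤ (A ^ (a + b + 1) * Real.exp ((A + B + 1) * (1 / A))) *
          (B ^ (a + b + 1) * Real.exp ((A + B + 1) * (1 / B))) *
          ((A + B + 1 + 1) ^ (a + b + 1 + 1) * Real.exp (-(A + B + 1))) := by gcongr
      _ = (A ^ (a + b + 1) * Real.exp ((A + B + 1) * (1 / A))) *
          (B ^ (a + b + 1) * Real.exp ((A + B + 1) * (1 / B))) *
          (((A + B + 1 + 1) ^ (a + 1) * (A + B + 1 + 1) ^ (b + 1)) *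
            Real.exp (-(A + B + 1))) := by
          rw [← pow_add]; congr 3; ring
      _ ≤ (A ^ (a + b + 1) * Real.exp ((B + 1) / 20)) *
          (B ^ (a + b + 1) * Real.exp ((B + 1) / 20)) *
          ((((A + 1) ^ (a + 1) * Real.exp (7 / 10 * (B + 1))) *
            ((B + 1) ^ (b + 1) * Real.exp (A + 1))) *
            Real.exp (-(A + B + 1))) := by gcongr
      _ = (Real.exp ((B + 1) / 20) * Real.exp ((B + 1) / 20) * Real.exp (7 / 10 * (B + 1)) *
            Real.exp (A + 1) * Real.exp (-(A + B + 1))) * (A * B) ^ (a + b + 1) *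
          ((A + 1) ^ (a + 1) * (B + 1) ^ (b + 1)) := by rw [mul_pow]; ring
      _ = _ := by
          congr 2
          simp only [← Real.exp_add]
          congr 1
          ring
  have main2 := le_of_mul_le_mul_right main hP
  refine le_of_mul_le_mul_right ?_ hfpos
  calc _ ≤ _ := main2
    _ ≤ Real.exp (1 - (B + 1) / 5) * (F * C) := by gcongr
    _ = _ := by ring

theorem ratio_aux (m n : ℕ) (hm : 41 ≤ m) (hmn : m ≤ n) :
    ((m ^ (n - 1) * n ^ (m - 1) : ℕ) : ℝ) / ((m * n).choose (m + n - 1) : ℝ) ≤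
      Real.exp (1 - (n : ℝ) / 5) := by
  obtain ⟨a, rfl⟩ : ∃ a, m = a + 1 := ⟨m - 1, by omega⟩
  obtain ⟨b, rfl⟩ : ∃ b, n = b + 1 := ⟨n - 1, by omega⟩
  have h := key_aux a b (by omega) (by omega)
  have e : a + 1 + (b + 1) - 1 = a + b + 1 := by omega
  rw [e, Nat.add_sub_cancel, Nat.add_sub_cancel]
  exact div_le_of_le_mul₀ (by positivity) (by positivity) h

theorem stmt_4 :
    ∀ ε : ℝ, 0 < ε → ∃ N : ℕ, ∀ m n : ℕ, N ≤ m → N ≤ n →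
      ((m ^ (n - 1) * n ^ (m - 1) : ℕ) : ℝ) / ((m * n).choose (m + n - 1) : ℝ) < ε := by
  intro ε hε
  obtain ⟨K, hK⟩ := exists_nat_gt (5 * (1 - Real.log ε))
  have hlt : ∀ n : ℕ, K ≤ n → Real.exp (1 - (n : ℝ) / 5) < ε := by
    intro n hn
    rw [← Real.lt_log_iff_exp_lt hε]
    have : (K : ℝ) ≤ n := by exact_mod_cast hn
    linarith
  refine ⟨max 41 K, fun m n hm hn => ?_⟩
  rcases le_total m n with h | h
  · exact (ratio_aux m n (by omega) h).trans_lt (hlt n (by omega))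
  · have h1 := (ratio_aux n m (by omega) h).trans_lt (hlt m (by omega))
    rwa [mul_comm (n ^ (m - 1)), mul_comm n m, add_comm n m] at h1
end

section
/- Let a finite group G act on finite sets X, Y with μ₁, μ₂ G-invariant fully supported probability measures. If μ and ν are distinct extreme points of K(μ₁,μ₂), then their supports are not both contained in a common G-good subset of X × Y; in particular μ and ν have distinct supports. -/
open Finset

def IsGGood (G : Type*) {X Y : Type*} [Group G] [MulAction G X] [MulAction G Y]
    (S : Set (X × Y)) : Prop :=
  (∀ (g : G), ∀ p ∈ S, g • p ∈ S) ∧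
  ∀ f : X × Y → ℝ, (∀ (g : G), ∀ p ∈ S, f (g • p) = f p) →
    ∃ u : X → ℝ, ∃ v : Y → ℝ,
      (∀ (g : G) (x : X), u (g • x) = u x) ∧ (∀ (g : G) (y : Y), v (g • y) = v y) ∧
      ∀ p ∈ S, f p = u p.1 + v p.2

def Kset (G : Type*) {X Y : Type*} [Group G] [MulAction G X] [MulAction G Y]
    [Fintype X] [Fintype Y] (μ₁ : X → ℝ) (μ₂ : Y → ℝ) : Set (X × Y → ℝ) :=
  {w | (∀ p, 0 ≤ w p) ∧ (∀ (g : G) (p : X × Y), w (g • p) = w p) ∧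
       (∀ x, ∑ y, w (x, y) = μ₁ x) ∧ (∀ y, ∑ x, w (x, y) = μ₂ y)}

theorem stmt_14 {G X Y : Type*} [Group G] [Finite G] [Fintype X] [Fintype Y]
    [MulAction G X] [MulAction G Y]
    (μ₁ : X → ℝ) (μ₂ : Y → ℝ)
    (h₁pos : ∀ x, 0 < μ₁ x) (h₂pos : ∀ y, 0 < μ₂ y)
    (h₁sum : ∑ x, μ₁ x = 1) (h₂sum : ∑ y, μ₂ y = 1)
    (h₁inv : ∀ (g : G) (x : X), μ₁ (g • x) = μ₁ x)
    (h₂inv : ∀ (g : G) (y : Y), μ₂ (g • y) = μ₂ y)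
    (μ ν : X × Y → ℝ)
    (hμ : μ ∈ Set.extremePoints ℝ (Kset G μ₁ μ₂))
    (hν : ν ∈ Set.extremePoints ℝ (Kset G μ₁ μ₂)) (hμν : μ ≠ ν) :
    (¬ ∃ T : Set (X × Y), IsGGood G T ∧ {p | μ p ≠ 0} ⊆ T ∧ {p | ν p ≠ 0} ⊆ T) ∧
      {p | μ p ≠ 0} ≠ {p | ν p ≠ 0} := by
  obtain ⟨⟨μ0, μG, μX, μY⟩, hext⟩ := hμ
  obtain ⟨⟨ν0, νG, νX, νY⟩, -⟩ := hν
  constructor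
  · rintro ⟨T, ⟨-, hT⟩, hμT, hνT⟩
    obtain ⟨u, v, -, -, huv⟩ := hT (fun p => μ p - ν p)
      (fun g p _ => by simp only [μG, νG])
    apply hμν
    have key : ∑ p : X × Y, (μ p - ν p) ^ 2 = 0 := by
      have e : ∀ p : X × Y, (μ p - ν p) ^ 2
          = u p.1 * (μ p - ν p) + v p.2 * (μ p - ν p) := by
        intro p
        by_cases hp : p ∈ T
        · have := huv p hp
          rw [← add_mul, ← this, sq]
        · have h1 : μ p = 0 := by
            by_contra h
            exact hp (hμT h)
          have h2 : ν p = 0 := by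
            by_contra h
            exact hp (hνT h)
          simp [h1, h2]
      rw [Finset.sum_congr rfl (fun p _ => e p), Finset.sum_add_distrib]
      have a : ∑ p : X × Y, u p.1 * (μ p - ν p) = 0 := by
        rw [Fintype.sum_prod_type]
        apply Finset.sum_eq_zero
        intro x _
        dsimp only
        rw [← Finset.mul_sum, Finset.sum_sub_distrib, μX, νX]
        ring
      have b : ∑ p : X × Y, v p.2 * (μ p - ν p) = 0 := by
        rw [Fintype.sum_prod_type_right]
        apply Finset.sum_eq_zero
        intro y _
        dsimp only
        rw [← Finset.mul_sum, Finset.sum_sub_distrib, μY, νY]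
        ring
      rw [a, b, add_zero]
    rw [Finset.sum_eq_zero_iff_of_nonneg (fun p _ => sq_nonneg _)] at key
    funext p
    have := key p (Finset.mem_univ p)
    exact sub_eq_zero.mp (pow_eq_zero_iff (by norm_num) |>.mp this)
  · intro hS
    set c : ℝ := 1 + ∑ p : X × Y, ν p / μ p with hc
    have hnn : ∀ p : X × Y, 0 ≤ ν p / μ p := fun p => div_nonneg (ν0 p) (μ0 p)
    have hc0 : 0 < c := by
      have : 0 ≤ ∑ p : X × Y, ν p / μ p := Finset.sum_nonneg (fun p _ => hnn p)
      linarith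
    have hle : ∀ p, ν p ≤ c * μ p := by
      intro p
      by_cases h : μ p = 0
      · have h2 : ν p = 0 := by
          by_contra h'
          have : p ∈ {p | μ p ≠ 0} := by rw [hS]; exact h'
          exact this h
        simp [h, h2]
      · have hpos : 0 < μ p := lt_of_le_of_ne (μ0 p) (Ne.symm h)
        rw [← div_le_iff₀ hpos]
        have := Finset.single_le_sum (f := fun p => ν p / μ p)
          (fun p _ => hnn p) (Finset.mem_univ p)
        linarith
    have hw : (fun p => ((c + 1) * μ p - ν p) / c) ∈ Kset G μ₁ μ₂ := by
      refine ⟨fun p => ?_, fun g p => ?_, fun x => ?_, fun y => ?_⟩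
      · apply div_nonneg _ hc0.le
        have := hle p
        have := μ0 p
        linarith
      · simp only [μG, νG]
      · rw [← Finset.sum_div, Finset.sum_sub_distrib, ← Finset.mul_sum, μX, νX]
        field_simp
        ring
      · rw [← Finset.sum_div, Finset.sum_sub_distrib, ← Finset.mul_sum, μY, νY]
        field_simp
        ring
    have hseg : μ ∈ openSegment ℝ ν (fun p => ((c + 1) * μ p - ν p) / c) := by
      refine ⟨1 / (c + 1), c / (c + 1), by positivity, by positivity, by field_simp; ring, ?_⟩
      funext p
      simp only [Pi.add_apply, Pi.smul_apply, smul_eq_mul]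
      field_simp
      ring
    have hνK : ν ∈ Kset G μ₁ μ₂ := ⟨ν0, νG, νX, νY⟩
    exact hμν (hext hνK hw hseg).symm
end
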